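/- Let α be a real number with 0 < α < 1. For (λ₁, λ₂) ∈ (0,1)² define I(λ₁, λ₂) = ∫_0^1 ( ∫_0^x x^{−α}(1−x)^{−α}(1−λ₁x)^{−α} · y^{α−1}(1−y)^{α−1}(1−λ₂y)^{α−1} dy ) dx. Then for all (λ₁, λ₂) ∈ (0,1)² with λ₁ ≠ λ₂: λ₁(1−λ₁)·(∂²I/∂λ₁²)(λ₁,λ₂) + 2(1−α−λ₁)·(∂I/∂λ₁)(λ₁,λ₂) − α(1−α)·I(λ₁,λ₂) = (1/(λ₁−λ₂)) · ( ((1−λ₂)/(1−λ₁))^{α} − 1 ). -/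

import Mathlib

open Real

/-- The double integral
`I(λ₁, λ₂) = ∫₀¹ (∫₀ˣ x^(−α)(1−x)^(−α)(1−λ₁x)^(−α) · y^(α−1)(1−y)^(α−1)(1−λ₂y)^(α−1) dy) dx`. -/
noncomputable def Idbl (α l₁ l₂ : ℝ) : ℝ :=
  ∫ x in (0 : ℝ)..1, ∫ y in (0 : ℝ)..x,
    x ^ (-α) * (1 - x) ^ (-α) * (1 - l₁ * x) ^ (-α) *
      (y ^ (α - 1) * (1 - y) ^ (α - 1) * (1 - l₂ * y) ^ (α - 1))

/-
The hypergeometric operator in `t` with parameters `a, b, b + d` sends Euler's kernel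
`x^(b-1) (1-x)^(d-1) (1 - t x)^(-a)` to the exact term `-a d/dx [x^b (1-x)^d (1 - t x)^(-a-1)]`.
If the kernel is multiplied by a function `G(x)`, integrating by parts therefore turns the operator
into `a ∫ x^b (1-x)^d (1 - t x)^(-a-1) G'(x) dx`. The Picard–Fuchs operator is the case `a = α`,
`b = d = 1 - α`. With the inner integral of `Idbl` as `G`, the powers of `x` and `1 - x` cancel, and
the remaining `α (1 - λ₁ x)^(-α-1) (1 - λ₂ x)^(α-1)` has the primitive
`((1 - λ₂ x) / (1 - λ₁ x))^α / (λ₁ - λ₂)`.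
-/

open Set MeasureTheory

open scoped Interval Topology

section IntervalIntegral

variable {a b : ℝ}

/- `φ'` is bounded on the product of `[[a, b]]` with a compact neighbourhood of `t₀`, so a multiple
of `|w|` dominates the differentiated integrand. -/
theorem hasDerivAt_integral_mul_of_continuousOn {w : ℝ → ℝ} {φ φ' : ℝ → ℝ → ℝ} {U : Set ℝ} {t₀ : ℝ}
    (hw : IntervalIntegrable w volume a b) (hU : U ∈ 𝓝 t₀)
    (hφ : ∀ t ∈ U, ∀ x ∈ [[a, b]], HasDerivAt (φ · x) (φ' t x) t)
    (hφc : ∀ t ∈ U, ContinuousOn (φ t) [[a, b]])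
    (hφ'c : ContinuousOn (fun p : ℝ × ℝ ↦ φ' p.1 p.2) (U ×ˢ [[a, b]])) :
    HasDerivAt (fun t ↦ ∫ x in a..b, w x * φ t x) (∫ x in a..b, w x * φ' t₀ x) t₀ := by
  obtain ⟨K, hK, hKU, hKc⟩ := local_compact_nhds hU
  obtain ⟨C, hC⟩ := (hKc.prod isCompact_uIcc).exists_bound_of_continuousOn
    (hφ'c.mono (prod_mono_left hKU))
  have hφ't₀ : ContinuousOn (φ' t₀) [[a, b]] :=
    hφ'c.comp (f := fun x ↦ (t₀, x)) (by fun_prop) fun x hx ↦ ⟨mem_of_mem_nhds hU, hx⟩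
  refine (intervalIntegral.hasDerivAt_integral_of_dominated_loc_of_deriv_le
    (F := fun t x ↦ w x * φ t x) (F' := fun t x ↦ w x * φ' t x) (bound := fun x ↦ ‖w x‖ * C)
    hK ?_ ?_ ?_ ?_ (hw.norm.mul_const C) ?_).2
  · filter_upwards [hU] with t ht
    exact (hw.mul_continuousOn (hφc t ht)).aestronglyMeasurable_restrict_uIoc
  · exact hw.mul_continuousOn (hφc t₀ (mem_of_mem_nhds hU))
  · exact (hw.mul_continuousOn hφ't₀).aestronglyMeasurable_restrict_uIoc
  · refine .of_forall fun x hx t ht ↦ ?_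
    rw [norm_mul]
    exact mul_le_mul_of_nonneg_left (hC (t, x) ⟨ht, uIoc_subset_uIcc hx⟩) (norm_nonneg _)
  · exact .of_forall fun x hx t ht ↦ (hφ t (hKU ht) x (uIoc_subset_uIcc hx)).const_mul (w x)

theorem hasDerivAt_integral_of_continuousOn_Ioo {g : ℝ → ℝ} {x : ℝ}
    (hg : IntervalIntegrable g volume a b) (hgc : ContinuousOn g (Ioo a b)) (hx : x ∈ Ioo a b) :
    HasDerivAt (fun x ↦ ∫ y in a..x, g y) (g x) x :=
  intervalIntegral.integral_hasDerivAt_right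
    (hg.mono_set (uIcc_subset_uIcc_left (Icc_subset_uIcc (Ioo_subset_Icc_self hx))))
    (hgc.stronglyMeasurableAtFilter isOpen_Ioo x hx)
    (hgc.continuousAt (isOpen_Ioo.mem_nhds hx))

theorem intervalIntegrable_rpow_mul_one_sub_rpow {u v : ℝ} (hu : 0 < u) (hv : 0 < v) :
    IntervalIntegrable (fun x : ℝ ↦ x ^ (u - 1) * (1 - x) ^ (v - 1)) volume 0 1 := by
  have h := (Complex.betaIntegral_convergent (u := u) (v := v) (by simpa) (by simpa)).norm
  refine h.congr_uIoo fun x hx ↦ ?_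
  rw [uIoo_of_le zero_le_one] at hx
  have h₁ : (x : ℂ) ^ ((u : ℂ) - 1) = (x ^ (u - 1) : ℝ) := by
    rw [Complex.ofReal_cpow hx.1.le]; push_cast; rfl
  have h₂ : (1 - (x : ℂ)) ^ ((v : ℂ) - 1) = ((1 - x) ^ (v - 1) : ℝ) := by
    rw [Complex.ofReal_cpow (sub_nonneg.2 hx.2.le)]; push_cast; rfl
  have hx' : 0 < 1 - x := sub_pos.2 hx.2
  simp only [h₁, h₂, norm_mul, Complex.norm_real, Real.norm_of_nonneg (rpow_nonneg hx.1.le _),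
    Real.norm_of_nonneg (rpow_nonneg hx'.le _)]

end IntervalIntegral

section OneSubMulRpow

variable {s t x : ℝ}

theorem one_sub_mul_pos (ht : t < 1) (hx : x ∈ [[0, 1]]) : 0 < 1 - t * x := by
  rw [uIcc_of_le zero_le_one] at hx
  rcases hx.2.eq_or_lt with rfl | hx₁
  · linarith
  · nlinarith [hx.1]

theorem continuousOn_one_sub_mul_rpow (ht : t < 1) (p : ℝ) :
    ContinuousOn (fun x ↦ (1 - t * x) ^ p) [[0, 1]] :=
  .rpow_const (by fun_prop) fun _ hx ↦ .inl (one_sub_mul_pos ht hx).ne'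

theorem hasDerivAt_one_sub_mul_rpow (h : 1 - t * x ≠ 0) (p : ℝ) :
    HasDerivAt (fun x ↦ (1 - t * x) ^ p) (-t * p * (1 - t * x) ^ (p - 1)) x := by
  simpa using (((hasDerivAt_id x).const_mul t).const_sub 1).rpow_const (p := p) (.inl h)

theorem hasDerivAt_one_sub_mul_rpow_mul_rpow_neg (hs : 1 - s * x ≠ 0) (ht : 1 - t * x ≠ 0)
    (α : ℝ) :
    HasDerivAt (fun x ↦ (1 - t * x) ^ α * (1 - s * x) ^ (-α))
      (α * (s - t) * ((1 - s * x) ^ (-(α + 1)) * (1 - t * x) ^ (α - 1))) x := by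
  refine ((hasDerivAt_one_sub_mul_rpow ht α).mul
    (hasDerivAt_one_sub_mul_rpow hs (-α))).congr_deriv ?_
  rw [show (1 - t * x) ^ α = (1 - t * x) ^ (α - 1) * (1 - t * x) by
      rw [← rpow_add_one ht, sub_add_cancel],
    show (1 - s * x) ^ (-α) = (1 - s * x) ^ (-(α + 1)) * (1 - s * x) by
      rw [← rpow_add_one hs]; ring_nf,
    show -α - 1 = -(α + 1) by ring]
  ring

theorem integral_one_sub_mul_rpow_mul_rpow (hs : s < 1) (ht : t < 1) (hst : s ≠ t) (α : ℝ) :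
    α * ∫ x in (0 : ℝ)..1, (1 - s * x) ^ (-(α + 1)) * (1 - t * x) ^ (α - 1) =
      1 / (s - t) * (((1 - t) / (1 - s)) ^ α - 1) := by
  have hint := ((continuousOn_one_sub_mul_rpow hs (-(α + 1))).mul
    (continuousOn_one_sub_mul_rpow ht (α - 1))).intervalIntegrable (μ := volume)
  have hFTC := intervalIntegral.integral_eq_sub_of_hasDerivAt (fun x hx ↦
    hasDerivAt_one_sub_mul_rpow_mul_rpow_neg (one_sub_mul_pos hs hx).ne'
      (one_sub_mul_pos ht hx).ne' α)
    (hint.const_mul (α * (s - t)))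
  rw [intervalIntegral.integral_const_mul] at hFTC
  have hs' : 0 < 1 - s := sub_pos.2 hs
  rw [div_rpow (sub_nonneg.2 ht.le) hs'.le, one_div, eq_inv_mul_iff_mul_eq₀ (sub_ne_zero.2 hst),
    div_eq_mul_inv, ← rpow_neg hs'.le]
  simp only [mul_one, mul_zero, sub_zero, one_rpow] at hFTC
  linarith

end OneSubMulRpow

section EulerIntegral

/-- The Euler transform `t ↦ ∫₀¹ w(x) (1 - t x)^(-a) dx` of a weight `w`; the weight
`x^(b-1) (1-x)^(c-b-1)` gives, up to a Beta factor, Euler's integral for the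
Gauss hypergeometric function. -/
noncomputable def eulerIntegral (a : ℝ) (w : ℝ → ℝ) (t : ℝ) : ℝ :=
  ∫ x in (0 : ℝ)..1, w x * (1 - t * x) ^ (-a)

/-- The Gauss hypergeometric differential operator with parameters `a, b, c`. -/
noncomputable def hypergeometricOp (a b c : ℝ) (f : ℝ → ℝ) (t : ℝ) : ℝ :=
  t * (1 - t) * deriv (deriv f) t + (c - (a + b + 1) * t) * deriv f t - a * b * f t

variable {t : ℝ} {w : ℝ → ℝ}

theorem hasDerivAt_eulerIntegral (a : ℝ) (hw : IntervalIntegrable w volume 0 1) (ht : t < 1) :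
    HasDerivAt (eulerIntegral a w) (a * eulerIntegral (a + 1) (fun x ↦ x * w x) t) t := by
  have hderiv := hasDerivAt_integral_mul_of_continuousOn (φ := fun t x ↦ (1 - t * x) ^ (-a))
    (φ' := fun t x ↦ -x * -a * (1 - t * x) ^ (-a - 1)) hw (Iio_mem_nhds ht)
    (fun t ht x hx ↦ by
      have h := one_sub_mul_pos ht hx
      simp only [mul_comm t x] at h
      simpa only [mul_comm x] using hasDerivAt_one_sub_mul_rpow h.ne' (-a))
    (fun t ht ↦ continuousOn_one_sub_mul_rpow ht (-a))
    (.mul (by fun_prop) (.rpow_const (by fun_prop) fun p hp ↦ .inl (one_sub_mul_pos hp.1 hp.2).ne'))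
  refine hderiv.congr_deriv ?_
  rw [eulerIntegral, ← intervalIntegral.integral_const_mul]
  refine intervalIntegral.integral_congr fun x _ ↦ ?_
  simp only [neg_add']
  ring

theorem deriv_deriv_eulerIntegral (a : ℝ) (hw : IntervalIntegrable w volume 0 1) (ht : t < 1) :
    deriv (deriv (eulerIntegral a w)) t =
      a * (a + 1) * eulerIntegral (a + 2) (fun x ↦ x ^ 2 * w x) t := by
  have hderiv : deriv (eulerIntegral a w) =ᶠ[𝓝 t]
      fun t ↦ a * eulerIntegral (a + 1) (fun x ↦ x * w x) t := by
    filter_upwards [Iio_mem_nhds ht] with t ht using (hasDerivAt_eulerIntegral a hw ht).deriv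
  have hxw : IntervalIntegrable (fun x ↦ x * w x) volume 0 1 := hw.continuousOn_mul (by fun_prop)
  rw [hderiv.deriv_eq, ((hasDerivAt_eulerIntegral (a + 1) hxw ht).const_mul a).deriv, mul_assoc]
  ring_nf

theorem hypergeometricOp_eulerIntegral (a b c : ℝ) (hw : IntervalIntegrable w volume 0 1)
    (ht : t < 1) :
    hypergeometricOp a b c (eulerIntegral a w) t =
      -a * ∫ x in (0 : ℝ)..1, w x * (b * (1 - t * x) ^ (-a)
        - (c - (a + b + 1) * t) * x * (1 - t * x) ^ (-(a + 1))
        - (a + 1) * t * (1 - t) * x ^ 2 * (1 - t * x) ^ (-(a + 2))) := by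
  have h₀ := (hw.mul_continuousOn (continuousOn_one_sub_mul_rpow ht (-a))).const_mul b
  have h₁ := ((hw.continuousOn_mul (g := fun x ↦ x) (by fun_prop)).mul_continuousOn
    (continuousOn_one_sub_mul_rpow ht (-(a + 1)))).const_mul (c - (a + b + 1) * t)
  have h₂ := ((hw.continuousOn_mul (g := fun x ↦ x ^ 2) (by fun_prop)).mul_continuousOn
    (continuousOn_one_sub_mul_rpow ht (-(a + 2)))).const_mul ((a + 1) * t * (1 - t))
  rw [hypergeometricOp, deriv_deriv_eulerIntegral a hw ht, (hasDerivAt_eulerIntegral a hw ht).deriv]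
  calc
    _ = -a * (b * eulerIntegral a w t
          - (c - (a + b + 1) * t) * eulerIntegral (a + 1) (fun x ↦ x * w x) t
          - (a + 1) * t * (1 - t) * eulerIntegral (a + 2) (fun x ↦ x ^ 2 * w x) t) := by ring
    _ = _ := by
      simp only [eulerIntegral, ← intervalIntegral.integral_const_mul]
      rw [← intervalIntegral.integral_sub h₀ h₁, ← intervalIntegral.integral_sub (h₀.sub h₁) h₂,
        ← intervalIntegral.integral_const_mul]
      refine intervalIntegral.integral_congr fun x _ ↦ ?_
      ring

theorem hasDerivAt_rpow_mul_one_sub_rpow_mul_rpow {x : ℝ} (a b d : ℝ) (hx₀ : x ≠ 0)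
    (hx₁ : 1 - x ≠ 0) (htx : 1 - t * x ≠ 0) :
    HasDerivAt (fun x ↦ x ^ b * (1 - x) ^ d * (1 - t * x) ^ (-(a + 1)))
      (x ^ (b - 1) * (1 - x) ^ (d - 1) * (b * (1 - t * x) ^ (-a)
        - (b + d - (a + b + 1) * t) * x * (1 - t * x) ^ (-(a + 1))
        - (a + 1) * t * (1 - t) * x ^ 2 * (1 - t * x) ^ (-(a + 2)))) x := by
  have hd₁ : HasDerivAt (fun x : ℝ ↦ (1 - x) ^ d) (-d * (1 - x) ^ (d - 1)) x := by
    simpa using hasDerivAt_one_sub_mul_rpow (t := 1) (by simpa using hx₁) d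
  refine (((hasDerivAt_rpow_const (.inl hx₀)).mul hd₁).mul
    (hasDerivAt_one_sub_mul_rpow htx (-(a + 1)))).congr_deriv ?_
  have hb : x ^ b = x ^ (b - 1) * x := by rw [← rpow_add_one hx₀, sub_add_cancel]
  have hd : (1 - x) ^ d = (1 - x) ^ (d - 1) * (1 - x) := by
    rw [← rpow_add_one hx₁, sub_add_cancel]
  have ha₁ : (1 - t * x) ^ (-(a + 1)) = (1 - t * x) ^ (-(a + 2)) * (1 - t * x) := by
    rw [← rpow_add_one htx]; ring_nf
  have ha : (1 - t * x) ^ (-a) = (1 - t * x) ^ (-(a + 2)) * (1 - t * x) ^ 2 := by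
    rw [← rpow_add_natCast htx]; norm_num
  rw [show -(a + 1) - 1 = -(a + 2) by ring, Pi.mul_apply, hb, hd, ha, ha₁]
  ring

theorem hypergeometricOp_eulerIntegral_rpow_mul {b d : ℝ} {g G : ℝ → ℝ} (a : ℝ) (hb : 0 < b)
    (hd : 0 < d) (ht : t < 1) (hGc : ContinuousOn G [[0, 1]])
    (hG : ∀ x ∈ Ioo 0 1, HasDerivAt G (g x) x) (hg : IntervalIntegrable g volume 0 1) :
    hypergeometricOp a b (b + d)
        (eulerIntegral a fun x ↦ x ^ (b - 1) * (1 - x) ^ (d - 1) * G x) t =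
      a * ∫ x in (0 : ℝ)..1, g x * (x ^ b * (1 - x) ^ d * (1 - t * x) ^ (-(a + 1))) := by
  have hβ := intervalIntegrable_rpow_mul_one_sub_rpow hb hd
  have hcont : ContinuousOn (fun x : ℝ ↦ x ^ b * (1 - x) ^ d * (1 - t * x) ^ (-(a + 1))) [[0, 1]] :=
    (Continuous.continuousOn <| .mul (.rpow_const (by fun_prop) fun _ ↦ .inr hb.le)
      (.rpow_const (by fun_prop) fun _ ↦ .inr hd.le)).mul (continuousOn_one_sub_mul_rpow ht _)
  have hv := fun x (hx : x ∈ Ioo (min (0 : ℝ) 1) (max 0 1)) ↦ by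
    rw [min_eq_left zero_le_one, max_eq_right zero_le_one] at hx
    exact hasDerivAt_rpow_mul_one_sub_rpow_mul_rpow a b d hx.1.ne' (sub_pos.2 hx.2).ne'
      (one_sub_mul_pos ht (Icc_subset_uIcc (Ioo_subset_Icc_self hx))).ne'
  have hparts := intervalIntegral.integral_mul_deriv_eq_deriv_mul_of_hasDerivAt hGc hcont
    (by simpa using hG) hv hg <| hβ.mul_continuousOn <|
      .sub (.sub (.const_mul (continuousOn_one_sub_mul_rpow ht _) b)
        (.mul (by fun_prop) (continuousOn_one_sub_mul_rpow ht _)))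
      (.mul (by fun_prop) (continuousOn_one_sub_mul_rpow ht _))
  simp only [sub_self, zero_rpow hb.ne', zero_rpow hd.ne', mul_zero, zero_mul, zero_sub] at hparts
  rw [hypergeometricOp_eulerIntegral a b _ (hβ.mul_continuousOn hGc) ht,
    ← neg_eq_iff_eq_neg.2 hparts, mul_neg, neg_mul]
  congr 2
  refine intervalIntegral.integral_congr fun x _ ↦ ?_
  ring

end EulerIntegral

theorem Idbl_eq_eulerIntegral (α t l : ℝ) :
    Idbl α t l = eulerIntegral α (fun x ↦ x ^ (1 - α - 1) * (1 - x) ^ (1 - α - 1) *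
      ∫ y in (0 : ℝ)..x, y ^ (α - 1) * (1 - y) ^ (α - 1) * (1 - l * y) ^ (α - 1)) t := by
  simp only [Idbl, eulerIntegral, intervalIntegral.integral_const_mul, show 1 - α - 1 = -α by ring]
  congr 1 with x
  ring

theorem rpow_sub_one_mul_rpow_one_sub {x : ℝ} (hx : 0 < x) (α : ℝ) :
    x ^ (α - 1) * x ^ (1 - α) = 1 := by
  rw [← rpow_add hx, sub_add_sub_cancel, sub_self, rpow_zero]

theorem hypergeometricOp_Idbl {α l₁ l₂ : ℝ} (hα₀ : 0 < α) (hα₁ : α < 1) (hl₁ : l₁ < 1)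
    (hl₂ : l₂ < 1) :
    hypergeometricOp α (1 - α) (1 - α + (1 - α)) (fun t ↦ Idbl α t l₂) l₁ =
      α * ∫ x in (0 : ℝ)..1, (1 - l₁ * x) ^ (-(α + 1)) * (1 - l₂ * x) ^ (α - 1) := by
  set g : ℝ → ℝ := fun y ↦ y ^ (α - 1) * (1 - y) ^ (α - 1) * (1 - l₂ * y) ^ (α - 1) with hg
  have hgi : IntervalIntegrable g volume 0 1 :=
    (intervalIntegrable_rpow_mul_one_sub_rpow hα₀ hα₀).mul_continuousOn
      (continuousOn_one_sub_mul_rpow hl₂ _)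
  have hgc : ContinuousOn g (Ioo 0 1) :=
    .mul (.mul (.rpow_const (by fun_prop) fun x hx ↦ .inl hx.1.ne')
        (.rpow_const (by fun_prop) fun x hx ↦ .inl (sub_pos.2 hx.2).ne'))
      ((continuousOn_one_sub_mul_rpow hl₂ _).mono (Ioo_subset_Icc_self.trans Icc_subset_uIcc))
  rw [funext fun t ↦ Idbl_eq_eulerIntegral α t l₂,
    hypergeometricOp_eulerIntegral_rpow_mul α (sub_pos.2 hα₁) (sub_pos.2 hα₁) hl₁
      (intervalIntegral.continuousOn_primitive_interval' hgi left_mem_uIcc)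
      (fun x hx ↦ hasDerivAt_integral_of_continuousOn_Ioo hgi hgc hx) hgi]
  congr 1
  refine intervalIntegral.integral_congr_Ioo_of_le zero_le_one fun x hx ↦ ?_
  have hx₀ := rpow_sub_one_mul_rpow_one_sub hx.1 α
  have hx₁ := rpow_sub_one_mul_rpow_one_sub (sub_pos.2 hx.2) α
  calc
    _ = (x ^ (α - 1) * x ^ (1 - α)) * ((1 - x) ^ (α - 1) * (1 - x) ^ (1 - α)) *
          ((1 - l₁ * x) ^ (-(α + 1)) * (1 - l₂ * x) ^ (α - 1)) := by simp only [hg]; ring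
    _ = _ := by rw [hx₀, hx₁, one_mul, one_mul]

theorem stmt5_general (α : ℝ) (hα0 : 0 < α) (hα1 : α < 1)
    (l₁ l₂ : ℝ) (hl₁ : l₁ < 1) (hl₂ : l₂ < 1) (hne : l₁ ≠ l₂) :
    l₁ * (1 - l₁) * deriv (deriv (fun t : ℝ => Idbl α t l₂)) l₁
      + 2 * (1 - α - l₁) * deriv (fun t : ℝ => Idbl α t l₂) l₁
      - α * (1 - α) * Idbl α l₁ l₂
      = (1 / (l₁ - l₂)) * (((1 - l₂) / (1 - l₁)) ^ α - 1) := by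
  rw [← integral_one_sub_mul_rpow_mul_rpow hl₁ hl₂ hne, ← hypergeometricOp_Idbl hα0 hα1 hl₁ hl₂,
    hypergeometricOp]
  ring

/-- For `0 < α < 1` and distinct `λ₁, λ₂ ∈ (0,1)`, the
inhomogeneous Picard–Fuchs equation in `λ₁` holds:
`λ₁(1−λ₁) ∂²I/∂λ₁² + 2(1−α−λ₁) ∂I/∂λ₁ − α(1−α) I
  = (1/(λ₁−λ₂)) (((1−λ₂)/(1−λ₁))^α − 1)`. -/
theorem stmt5 (α : ℝ) (hα0 : 0 < α) (hα1 : α < 1)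
    (l₁ l₂ : ℝ) (hl₁ : l₁ ∈ Set.Ioo (0 : ℝ) 1) (hl₂ : l₂ ∈ Set.Ioo (0 : ℝ) 1)
    (hne : l₁ ≠ l₂) :
    l₁ * (1 - l₁) * deriv (deriv (fun t : ℝ => Idbl α t l₂)) l₁
      + 2 * (1 - α - l₁) * deriv (fun t : ℝ => Idbl α t l₂) l₁
      - α * (1 - α) * Idbl α l₁ l₂
      = (1 / (l₁ - l₂)) * (((1 - l₂) / (1 - l₁)) ^ α - 1) :=
  stmt5_general α hα0 hα1 l₁ l₂ hl₁.2 hl₂.2 hne
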